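/- Let I ⊆ ℝ be a nonempty open interval and let f : I → ℝ be continuous. If f is both 2-increasing (i.e., convex) and 3-increasing on I, then (1/(y−x)) ∫_x^y f(t) dt ≤ (1/5) f(x) + (3/5) f((x+y)/2) + (1/5) f(y) for all x, y ∈ I with x < y, where the integral is with respect to Lebesgue measure. -/

import Mathlib

open MeasureTheory Set

/-- Integral of `f` over the set `A` with respect to the (automatically bounded) signed
Borel measure `μ`, defined via the Jordan decomposition. -/
noncomputable def sInt (μ : MeasureTheory.SignedMeasure ℝ) (A : Set ℝ) (f : ℝ → ℝ) : ℝ :=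
  (∫ t in A, f t ∂μ.toJordanDecomposition.posPart) -
  (∫ t in A, f t ∂μ.toJordanDecomposition.negPart)

/-- `μ_k(τ) = ∫_{[0,1]} (t-τ)^k dμ(t)` (with the convention `0^0 = 1`). -/
noncomputable def muK (μ : MeasureTheory.SignedMeasure ℝ) (k : ℕ) (τ : ℝ) : ℝ :=
  sInt μ (Icc 0 1) (fun t => (t - τ) ^ k)

/-- `μ_k^-(τ) = ∫_{[0,τ)} (t-τ)^k dμ(t)`. -/
noncomputable def muMinus (μ : MeasureTheory.SignedMeasure ℝ) (k : ℕ) (τ : ℝ) : ℝ :=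
  sInt μ (Ico 0 τ) (fun t => (t - τ) ^ k)

/-- `μ_k^+(τ) = ∫_{(τ,1]} (t-τ)^k dμ(t)`. -/
noncomputable def muPlus (μ : MeasureTheory.SignedMeasure ℝ) (k : ℕ) (τ : ℝ) : ℝ :=
  sInt μ (Ioc τ 1) (fun t => (t - τ) ^ k)

/-- The `n`th-order divided difference of `f` at the points `x 0, …, x n`. -/
noncomputable def divDiff (f : ℝ → ℝ) (n : ℕ) (x : Fin (n + 1) → ℝ) : ℝ :=
  ∑ j : Fin (n + 1), f (x j) / ∏ i ∈ Finset.univ.erase j, (x j - x i)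

/-- `f` is `n`-increasing on `I`: all `n`th-order divided differences at pairwise
distinct points of `I` are nonnegative. -/
def nIncreasingOn (f : ℝ → ℝ) (I : Set ℝ) (n : ℕ) : Prop :=
  ∀ x : Fin (n + 1) → ℝ, Function.Injective x → (∀ j, x j ∈ I) → 0 ≤ divDiff f n x

/-- `f` is `n`-decreasing on `I` if `-f` is `n`-increasing on `I`. -/
def nDecreasingOn (f : ℝ → ℝ) (I : Set ℝ) (n : ℕ) : Prop :=
  nIncreasingOn (fun u => -f u) I n

/-- `φ⁺_{p,n}(u) = ((u-p)_+)^n` for `n ≥ 1`, and `φ⁺_{p,0}` is the characteristic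
function of `(p,∞)`. -/
noncomputable def phiPlus (p : ℝ) (n : ℕ) (u : ℝ) : ℝ :=
  if n = 0 then (if p < u then 1 else 0) else (max 0 (u - p)) ^ n

/-- `φ⁻_{p,n}(u) = ((u-p)_−)^n` for `n ≥ 1`, and `φ⁻_{p,0}` is the characteristic
function of `(−∞,p)`. -/
noncomputable def phiMinus (p : ℝ) (n : ℕ) (u : ℝ) : ℝ :=
  if n = 0 then (if u < p then 1 else 0) else (max 0 (p - u)) ^ n

/- The set `J(p)` associated with an interval `I` and a point `p ∈ ℝ`:
`(−∞, (p − inf I)/(sup I − inf I))` if `p ≤ inf I` (interpreted as `(−∞,0)` when `I` is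
unbounded above), `ℝ` if `p ∈ I`, and `(1 + (p − sup I)/(sup I − inf I), ∞)` if
`p ≥ sup I` (interpreted as `(1,∞)` when `I` is unbounded below). -/
open scoped Classical in
noncomputable def Jset (I : Set ℝ) (p : ℝ) : Set ℝ :=
  if p ∈ I then Set.univ
  else if p ∈ lowerBounds I then
    (if BddAbove I then Set.Iio ((p - sInf I) / (sSup I - sInf I)) else Set.Iio 0)
  else
    (if BddBelow I then Set.Ioi (1 + (p - sSup I) / (sSup I - sInf I)) else Set.Ioi 1)

/-!
Cut `[x, y]` at the trisection point `c = (2x + y)/3` and at the midpoint `m = (x + y)/2`. On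
`[x, c]` and `[c, m]` convexity bounds `f` by its chords. On `[m, y]` the third-order hypothesis
says that second-order divided differences increase with their nodes, so that
`f[m, t, y] ≥ f[c, m, y]` and the chord bound improves by `f[c, m, y] (y - m) ^ 3 / 6`. Adding the
three bounds and eliminating `f c` by convexity gives the weights `3/16, 5/8, 3/16`; midpoint
convexity then relaxes them to `1/5, 3/5, 1/5`.
-/

section DividedDifferences

theorem prod_erase_succAbove {M : Type*} [CommMonoid M] {n : ℕ} (p : Fin (n + 1)) (j : Fin n)
    (g : Fin (n + 1) → M) :
    ∏ i ∈ Finset.univ.erase (p.succAbove j), g i =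
      g p * ∏ i ∈ Finset.univ.erase j, g (p.succAbove i) := by
  rw [Fin.univ_succAbove n p, Finset.erase_cons_of_ne _ (p.succAbove_ne j).symm, Finset.prod_cons,
    ← Fin.succAboveEmb_apply, ← Finset.map_erase, Finset.prod_map]
  rfl

variable {f : ℝ → ℝ} {n : ℕ} {x : Fin (n + 2) → ℝ}

theorem divDiff_mul_sub (hx : Function.Injective x) (p : Fin (n + 2)) :
    divDiff (fun u => f u * (u - x p)) (n + 1) x = divDiff f n (p.removeNth x) := by
  simp only [divDiff]
  rw [Fin.sum_univ_succAbove _ p, sub_self, mul_zero, zero_div, zero_add]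
  refine Finset.sum_congr rfl fun j _ => ?_
  have hne : x (p.succAbove j) - x p ≠ 0 := sub_ne_zero.2 (hx.ne (p.succAbove_ne j))
  rw [prod_erase_succAbove, mul_comm (f _), mul_div_mul_left _ _ hne]
  rfl

theorem sub_mul_divDiff (hx : Function.Injective x) (p q : Fin (n + 2)) :
    (x q - x p) * divDiff f (n + 1) x =
      divDiff f n (p.removeNth x) - divDiff f n (q.removeNth x) := by
  rw [← divDiff_mul_sub hx p, ← divDiff_mul_sub hx q]
  simp only [divDiff, Finset.mul_sum, ← Finset.sum_sub_distrib]
  exact Finset.sum_congr rfl fun j _ => by ring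

theorem nIncreasingOn.divDiff_removeNth_le {I : Set ℝ} (hf : nIncreasingOn f I (n + 1))
    (hx : Function.Injective x) (hxI : ∀ j, x j ∈ I) {p q : Fin (n + 2)} (hpq : x p ≤ x q) :
    divDiff f n (q.removeNth x) ≤ divDiff f n (p.removeNth x) := by
  rw [← sub_nonneg, ← sub_mul_divDiff hx]
  exact mul_nonneg (sub_nonneg.2 hpq) (hf x hx hxI)

theorem divDiff_one (f : ℝ → ℝ) (a b : ℝ) : divDiff f 1 ![a, b] = (f b - f a) / (b - a) := by
  have h₀ : Finset.univ.erase (0 : Fin 2) = {1} := by decide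
  have h₁ : Finset.univ.erase (1 : Fin 2) = {0} := by decide
  rw [divDiff, Fin.sum_univ_two, h₀, h₁, Finset.prod_singleton, Finset.prod_singleton]
  simp only [Matrix.cons_val]
  rw [← neg_sub b a, div_neg]
  ring

theorem divDiff_two (f : ℝ → ℝ) (a b c : ℝ) :
    divDiff f 2 ![a, b, c] =
      f a / ((a - b) * (a - c)) + f b / ((b - a) * (b - c)) + f c / ((c - a) * (c - b)) := by
  have h₀ : Finset.univ.erase (0 : Fin 3) = {1, 2} := by decide
  have h₁ : Finset.univ.erase (1 : Fin 3) = {0, 2} := by decide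
  have h₂ : Finset.univ.erase (2 : Fin 3) = {0, 1} := by decide
  rw [divDiff, Fin.sum_univ_three, h₀, h₁, h₂, Finset.prod_pair (by decide),
    Finset.prod_pair (by decide), Finset.prod_pair (by decide)]
  simp only [Matrix.cons_val]

theorem eq_chord_add_divDiff (f : ℝ → ℝ) {a t b : ℝ} (hat : a ≠ t) (htb : t ≠ b)
    (hab : a ≠ b) :
    f t = f a + (f b - f a) / (b - a) * (t - a) + divDiff f 2 ![a, t, b] * ((t - a) * (t - b)) := by
  have hta : t - a ≠ 0 := sub_ne_zero.2 hat.symm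
  have hbt : b - t ≠ 0 := sub_ne_zero.2 htb.symm
  have hba : b - a ≠ 0 := sub_ne_zero.2 hab.symm
  rw [divDiff_two, ← neg_sub t a, ← neg_sub b a, ← neg_sub b t]
  field_simp
  ring

end DividedDifferences

section HigherOrderMonotonicity

variable {I : Set ℝ} {f : ℝ → ℝ} {a b c t : ℝ}

theorem nIncreasingOn.divDiff_two_nonneg (hf : nIncreasingOn f I 2) (hI : I.OrdConnected)
    (ha : a ∈ I) (hb : b ∈ I) (ht : t ∈ Ioo a b) : 0 ≤ divDiff f 2 ![a, t, b] := by
  have htI : t ∈ I := hI.out ha hb (Ioo_subset_Icc_self ht)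
  have hmono : StrictMono ![a, t, b] := by simp [ht.1, ht.2]
  exact hf _ hmono.injective (by simp [Fin.forall_fin_succ, ha, htI, hb])

theorem nIncreasingOn.convexOn (hf : nIncreasingOn f I 2) (hI : I.OrdConnected) :
    ConvexOn ℝ I f := by
  refine convexOn_of_slope_mono_adjacent hI.convex fun {a t b} ha hb hat htb => ?_
  have htI : t ∈ I := hI.out ha hb ⟨hat.le, htb.le⟩
  have hmono : StrictMono ![a, t, b] := by simp [hat, htb]
  have hle := hf.divDiff_removeNth_le hmono.injective
    (by simp [Fin.forall_fin_succ, ha, htI, hb]) (hmono.monotone (Fin.zero_le 2))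
  have h₀ : Fin.removeNth 0 ![a, t, b] = ![t, b] := by ext i; fin_cases i <;> rfl
  have h₂ : Fin.removeNth 2 ![a, t, b] = ![a, t] := by ext i; fin_cases i <;> rfl
  rwa [h₀, h₂, divDiff_one, divDiff_one] at hle

theorem nIncreasingOn.divDiff_two_le_divDiff_two (hf : nIncreasingOn f I 3) (hI : I.OrdConnected)
    (hc : c ∈ I) (hb : b ∈ I) (hca : c < a) (ht : t ∈ Ioo a b) :
    divDiff f 2 ![c, a, b] ≤ divDiff f 2 ![a, t, b] := by
  have haI : a ∈ I := hI.out hc hb ⟨hca.le, (ht.1.trans ht.2).le⟩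
  have htI : t ∈ I := hI.out haI hb (Ioo_subset_Icc_self ht)
  have hmono : StrictMono ![c, a, t, b] := by simp [hca, ht.1, ht.2]
  have hle := hf.divDiff_removeNth_le hmono.injective
    (by simp [Fin.forall_fin_succ, hc, haI, htI, hb]) (hmono.monotone (Fin.zero_le 2))
  have h₀ : Fin.removeNth 0 ![c, a, t, b] = ![a, t, b] := by ext i; fin_cases i <;> rfl
  have h₂ : Fin.removeNth 2 ![c, a, t, b] = ![c, a, b] := by ext i; fin_cases i <;> rfl
  rwa [h₀, h₂] at hle

end HigherOrderMonotonicity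

section IntegralBounds

variable {I : Set ℝ} {f : ℝ → ℝ} {a b c D : ℝ}

theorem map_midpoint_le_of_convexOn (hf : ConvexOn ℝ I f) (ha : a ∈ I) (hb : b ∈ I) :
    f ((a + b) / 2) ≤ (f a + f b) / 2 := by
  have hconv := hf.2 ha hb (by norm_num : (0 : ℝ) ≤ 1 / 2) (by norm_num : (0 : ℝ) ≤ 1 / 2)
    (by norm_num)
  simp only [smul_eq_mul] at hconv
  rw [show 1 / 2 * a + 1 / 2 * b = (a + b) / 2 by ring] at hconv
  linarith

theorem exists_abs_le_of_convexOn_Icc (hf : ConvexOn ℝ (Icc a b) f) :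
    ∃ C, ∀ t ∈ Icc a b, |f t| ≤ C := by
  set M := max (f a) (f b)
  have upper : ∀ t ∈ Icc a b, f t ≤ M := fun t ht =>
    have hab := ht.1.trans ht.2
    hf.le_on_segment (left_mem_Icc.2 hab) (right_mem_Icc.2 hab)
      (segment_eq_Icc hab ▸ ht)
  -- The midpoint of `t` and its reflection `a + b - t` does not depend on `t`.
  have lower : ∀ t ∈ Icc a b, 2 * f ((a + b) / 2) - M ≤ f t := fun t ht => by
    have hr : a + b - t ∈ Icc a b := ⟨by linarith [ht.2], by linarith [ht.1]⟩
    have hmid := map_midpoint_le_of_convexOn hf ht hr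
    rw [add_sub_cancel] at hmid
    linarith [upper _ hr]
  exact ⟨_, fun t ht => abs_le_max_abs_abs (lower t ht) (upper t ht)⟩

theorem intervalIntegrable_of_convexOn_Icc (hab : a ≤ b) (hf : ConvexOn ℝ (Icc a b) f) :
    IntervalIntegrable f volume a b := by
  obtain ⟨C, hC⟩ := exists_abs_le_of_convexOn_Icc hf
  have hcont : ContinuousOn f (Ioo a b) := by
    simpa only [interior_Icc] using hf.continuousOn_interior
  rw [intervalIntegrable_iff_integrableOn_Ioo_of_le hab]
  refine .of_bound measure_Ioo_lt_top (hcont.aestronglyMeasurable measurableSet_Ioo) C ?_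
  exact ae_restrict_of_forall_mem measurableSet_Ioo fun t ht =>
    hC t (Ioo_subset_Icc_self ht)

theorem integral_newton_quadratic (a b A B D : ℝ) :
    ∫ t in a..b, (A + B * (t - a) + D * ((t - a) * (t - b))) =
      (b - a) * A + B * (b - a) ^ 2 / 2 - D * (b - a) ^ 3 / 6 := by
  have hderiv : ∀ t ∈ uIcc a b, HasDerivAt
      (fun t => A * t + B * ((t - a) ^ 2 / 2) +
        D * ((t - a) ^ 3 / 3 - (b - a) * ((t - a) ^ 2 / 2)))
      (A + B * (t - a) + D * ((t - a) * (t - b))) t := by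
    intro t _
    have h₁ : HasDerivAt (fun t => t - a) 1 t := (hasDerivAt_id t).sub_const a
    have h₂ := (h₁.pow 2).div_const 2
    have h₃ := (h₁.pow 3).div_const 3
    refine ((((hasDerivAt_id t).const_mul A).add (h₂.const_mul B)).add
      ((h₃.sub (h₂.const_mul (b - a))).const_mul D)).congr_deriv ?_
    push_cast
    ring
  rw [intervalIntegral.integral_eq_sub_of_hasDerivAt hderiv
    ((by fun_prop : Continuous _).intervalIntegrable a b)]
  ring

theorem integral_le_of_le_divDiff (hab : a < b) (hf : IntervalIntegrable f volume a b)
    (hD : ∀ t ∈ Ioo a b, D ≤ divDiff f 2 ![a, t, b]) :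
    ∫ t in a..b, f t ≤ (b - a) / 2 * (f a + f b) - D * (b - a) ^ 3 / 6 := by
  have hba : b - a ≠ 0 := (sub_pos.2 hab).ne'
  calc
    ∫ t in a..b, f t
    _ ≤ ∫ t in a..b, (f a + (f b - f a) / (b - a) * (t - a) + D * ((t - a) * (t - b))) := by
      refine intervalIntegral.integral_mono_on_of_le_Ioo hab.le hf
        ((by fun_prop : Continuous _).intervalIntegrable a b) fun t ht => ?_
      have hneg : (t - a) * (t - b) ≤ 0 :=
        mul_nonpos_of_nonneg_of_nonpos (sub_nonneg.2 ht.1.le) (sub_nonpos.2 ht.2.le)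
      rw [eq_chord_add_divDiff f ht.1.ne ht.2.ne hab.ne]
      gcongr _ + ?_
      exact mul_le_mul_of_nonpos_right (hD t ht) hneg
    _ = (b - a) / 2 * (f a + f b) - D * (b - a) ^ 3 / 6 := by
      rw [integral_newton_quadratic]
      field_simp
      ring

theorem nIncreasingOn.intervalIntegrable (hf : nIncreasingOn f I 2) (hI : I.OrdConnected)
    (ha : a ∈ I) (hb : b ∈ I) (hab : a ≤ b) : IntervalIntegrable f volume a b :=
  intervalIntegrable_of_convexOn_Icc hab ((hf.convexOn hI).subset (hI.out ha hb) (convex_Icc a b))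

theorem nIncreasingOn.integral_le_trapezoid (hf : nIncreasingOn f I 2) (hI : I.OrdConnected)
    (ha : a ∈ I) (hb : b ∈ I) (hab : a < b) :
    ∫ t in a..b, f t ≤ (b - a) / 2 * (f a + f b) := by
  simpa using integral_le_of_le_divDiff hab (hf.intervalIntegrable hI ha hb hab.le)
    fun t ht => hf.divDiff_two_nonneg hI ha hb ht

theorem nIncreasingOn.integral_le_trapezoid_sub (hf : nIncreasingOn f I 3) (hI : I.OrdConnected)
    (hfi : IntervalIntegrable f volume a b) (hc : c ∈ I) (hb : b ∈ I) (hca : c < a)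
    (hab : a < b) :
    ∫ t in a..b, f t ≤
      (b - a) / 2 * (f a + f b) - divDiff f 2 ![c, a, b] * (b - a) ^ 3 / 6 :=
  integral_le_of_le_divDiff hab hfi fun _ ht => hf.divDiff_two_le_divDiff_two hI hc hb hca ht

-- With step `h`, the trisection point and the midpoint are `x + 2 * h` and `x + 3 * h`.
theorem nIncreasingOn.integral_add_six_mul_le (h2 : nIncreasingOn f I 2)
    (h3 : nIncreasingOn f I 3) (hI : I.OrdConnected) {x h : ℝ} (hh : 0 < h) (hx : x ∈ I)
    (hy : x + 6 * h ∈ I) :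
    ∫ t in x..(x + 6 * h), f t ≤
      6 * h * (3 / 16 * f x + 5 / 8 * f (x + 3 * h) + 3 / 16 * f (x + 6 * h)) := by
  set c := x + 2 * h with hc
  set m := x + 3 * h with hm
  set y := x + 6 * h
  have hxc : x < c := by linarith
  have hcm : c < m := by linarith
  have hmy : m < y := by linarith
  have hcI : c ∈ I := hI.out hx hy ⟨hxc.le, (hcm.trans hmy).le⟩
  have hmI : m ∈ I := hI.out hx hy ⟨(hxc.trans hcm).le, hmy.le⟩
  have ixc := h2.intervalIntegrable hI hx hcI hxc.le
  have icm := h2.intervalIntegrable hI hcI hmI hcm.le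
  have imy := h2.intervalIntegrable hI hmI hy hmy.le
  have bxc : ∫ t in x..c, f t ≤ h * (f x + f c) :=
    (h2.integral_le_trapezoid hI hx hcI hxc).trans_eq (by rw [hc]; ring)
  have bcm : ∫ t in c..m, f t ≤ h / 2 * (f c + f m) :=
    (h2.integral_le_trapezoid hI hcI hmI hcm).trans_eq (by rw [hc, hm]; ring)
  have bmy : ∫ t in m..y, f t ≤ h * (3 * f m + 9 / 8 * f y - 9 / 8 * f c) := by
    refine (h3.integral_le_trapezoid_sub hI imy hcI hy hcm hmy).trans_eq ?_
    rw [divDiff_two, show c - m = -h by ring, show m - c = h by ring, show c - y = -(4 * h) by ring,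
      show y - c = 4 * h by ring, show m - y = -(3 * h) by ring, show y - m = 3 * h by ring]
    field_simp
    ring
  have hfc : f c ≤ 1 / 3 * f x + 2 / 3 * f m := by
    have hconv := (h2.convexOn hI).2 hx hmI (by norm_num : (0 : ℝ) ≤ 1 / 3)
      (by norm_num : (0 : ℝ) ≤ 2 / 3) (by norm_num)
    simpa only [smul_eq_mul, show 1 / 3 * x + 2 / 3 * m = c by ring] using hconv
  rw [← intervalIntegral.integral_add_adjacent_intervals (ixc.trans icm) imy,
    ← intervalIntegral.integral_add_adjacent_intervals ixc icm]
  linarith [mul_le_mul_of_nonneg_left hfc hh.le]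

end IntegralBounds

theorem stmt19_general {I : Set ℝ} (hI : I.OrdConnected) {f : ℝ → ℝ}
    (h2 : nIncreasingOn f I 2) (h3 : nIncreasingOn f I 3) {x y : ℝ} (hx : x ∈ I) (hy : y ∈ I)
    (hxy : x < y) :
    (1 / (y - x)) * ∫ t in x..y, f t ≤
      3 / 16 * f x + 5 / 8 * f ((x + y) / 2) + 3 / 16 * f y := by
  obtain ⟨h, rfl⟩ : ∃ h, y = x + 6 * h := ⟨(y - x) / 6, by ring⟩
  have hh : 0 < h := by linarith
  rw [one_div_mul_eq_div, show x + 6 * h - x = 6 * h by ring,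
    show (x + (x + 6 * h)) / 2 = x + 3 * h by ring, div_le_iff₀' (by positivity)]
  exact h2.integral_add_six_mul_le h3 hI hh hx hy

theorem stmt19 (I : Set ℝ) (hIo : IsOpen I) (hIc : I.OrdConnected) (hIne : I.Nonempty)
    (f : ℝ → ℝ) (hf : ContinuousOn f I)
    (h2 : nIncreasingOn f I 2) (h3 : nIncreasingOn f I 3) :
    ∀ x ∈ I, ∀ y ∈ I, x < y →
      (1 / (y - x)) * ∫ t in x..y, f t ≤
        1 / 5 * f x + 3 / 5 * f ((x + y) / 2) + 1 / 5 * f y := by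
  intro x hx y hy hxy
  linarith [stmt19_general hIc h2 h3 hx hy hxy,
    map_midpoint_le_of_convexOn (h2.convexOn hIc) hx hy]
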